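/- arXiv:math/0702809 — 2 statements merged into one kernel-verified Lean document; each statement's English description precedes it below -/
import Mathlib

section
/- For n ≥ 5, every n-dimensional complex filiform Zinbiel algebra is isomorphic to one of the three algebras F_n^1, F_n^2, F_n^3. -/
/-- A bilinear multiplication `mul` is a *Zinbiel* multiplication if it satisfies
`(x∘y)∘z = x∘(y∘z) + x∘(z∘y)`. -/
def IsZinbiel {K A : Type*} [CommRing K] [AddCommGroup A] [Module K A]
    (mul : A →ₗ[K] A →ₗ[K] A) : Prop :=
  ∀ x y z : A, mul (mul x y) z = mul x (mul y z) + mul x (mul z y)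

/-- The descending series of a (Zinbiel) algebra: `zpow mul i` is `A^i`,
with `A^1 = A` and `A^{k+1} = A ∘ A^k` (we also set `A^0 = A` for convenience). -/
def zpow {K A : Type*} [CommRing K] [AddCommGroup A] [Module K A]
    (mul : A →ₗ[K] A →ₗ[K] A) : ℕ → Submodule K A
  | 0 => ⊤
  | 1 => ⊤
  | (k+2) => Submodule.span K {z | ∃ a : A, ∃ b ∈ zpow mul (k+1), z = mul a b}

/-- The bilinear multiplication on `Fin n → ℂ` determined by structure constants `c`:
`e_i ∘ e_j = ∑ k, c i j k • e_k`. -/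
noncomputable def mulOf (n : ℕ) (c : Fin n → Fin n → Fin n → ℂ) :
    (Fin n → ℂ) →ₗ[ℂ] (Fin n → ℂ) →ₗ[ℂ] (Fin n → ℂ) :=
  LinearMap.mk₂ ℂ (fun x y k => ∑ i, ∑ j, x i * y j * c i j k)
    (fun x x' y => by
      funext k
      simp [add_mul, Finset.sum_add_distrib])
    (fun a x y => by
      funext k
      simp [Finset.mul_sum, mul_assoc])
    (fun x y y' => by
      funext k
      simp [mul_add, add_mul, Finset.sum_add_distrib])
    (fun a x y => by
      funext k
      simp [Finset.mul_sum, mul_assoc, mul_left_comm])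

/-- Two bilinear multiplications give isomorphic algebras if there is a linear
equivalence intertwining them. -/
def Isom {A B : Type*} [AddCommGroup A] [Module ℂ A] [AddCommGroup B] [Module ℂ B]
    (mulA : A →ₗ[ℂ] A →ₗ[ℂ] A) (mulB : B →ₗ[ℂ] B →ₗ[ℂ] B) : Prop :=
  ∃ f : A ≃ₗ[ℂ] B, ∀ x y : A, f (mulA x y) = mulB (f x) (f y)

/-- Structure constants of the nul-filiform algebra `NF_n`:
`e_i ∘ e_j = C(i+j-1, j) e_{i+j}` for `2 ≤ i+j ≤ n` (1-indexed). -/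
noncomputable def NFc (n : ℕ) : Fin n → Fin n → Fin n → ℂ := fun i j k =>
  if (i : ℕ) + j + 1 = (k : ℕ) then (((i : ℕ) + j + 1).choose ((j : ℕ) + 1) : ℂ) else 0

/-- The nul-filiform Zinbiel algebra `NF_n` (as a multiplication on `Fin n → ℂ`). -/
noncomputable def NFmul (n : ℕ) : (Fin n → ℂ) →ₗ[ℂ] (Fin n → ℂ) →ₗ[ℂ] (Fin n → ℂ) :=
  mulOf n (NFc n)

/-- Structure constants of the filiform algebra `F_n = F_n^1`:
`e_i ∘ e_j = C(i+j-1, j) e_{i+j}` for `2 ≤ i+j ≤ n-1` (1-indexed), other products zero. -/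
noncomputable def F1c (n : ℕ) : Fin n → Fin n → Fin n → ℂ := fun i j k =>
  if (i : ℕ) + j + 1 = (k : ℕ) ∧ (k : ℕ) + 1 ≤ n - 1 then
    (((i : ℕ) + j + 1).choose ((j : ℕ) + 1) : ℂ) else 0

/-- Structure constants of `F_n^2`: those of `F_n^1` together with `e_n ∘ e_1 = e_{n-1}`. -/
noncomputable def F2c (n : ℕ) : Fin n → Fin n → Fin n → ℂ := fun i j k =>
  F1c n i j k + (if (i : ℕ) = n - 1 ∧ (j : ℕ) = 0 ∧ (k : ℕ) = n - 2 then 1 else 0)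

/-- Structure constants of `F_n^3`: those of `F_n^1` together with `e_n ∘ e_n = e_{n-1}`. -/
noncomputable def F3c (n : ℕ) : Fin n → Fin n → Fin n → ℂ := fun i j k =>
  F1c n i j k + (if (i : ℕ) = n - 1 ∧ (j : ℕ) = n - 1 ∧ (k : ℕ) = n - 2 then 1 else 0)

/-!
In a filiform Zinbiel algebra `A` of dimension `n ≥ 5` some square `a ∘ a` lies outside `A^3`. The
identity `(x ∘ a) ∘ a^k = (k + 1) x ∘ a^{k+1}` then forces `a^k` to generate `A^k` modulo `A^{k+1}`
for every `k ≥ 2`, so left multiplication by `a` maps `⟨a⟩ + A^2` onto `A^2`, and some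
`f ∉ ⟨a⟩ + A^2` satisfies `a ∘ f = 0`. The Zinbiel identity yields
`a ∘ (f ∘ a) = a ∘ (f ∘ f) = 0`, and inside `A^2` only the multiples of `a^{n-1}` are killed by `a`;
hence `f ∘ a = α a^{n-1}` and `f ∘ f = β a^{n-1}`, which determines the whole multiplication table
on the basis `a, a^2, …, a^{n-1}, f`. Replacing `a` by `a + t f` and rescaling `f` brings `(α, β)`
to `(0, 0)`, `(1, 0)` or `(0, 1)`.
-/

open Module Submodule

section LinearAlgebra

theorem le_of_forall_le_sup_succ {α : Type*} [SemilatticeSup α] [OrderBot α] {P : ℕ → α} {s : α}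
    (h : ∀ k, P k ≤ s ⊔ P (k + 1)) {n : ℕ} (hn : P n = ⊥) : P 0 ≤ s := by
  have le_sup (k : ℕ) : P 0 ≤ s ⊔ P k := by
    induction k with
    | zero => exact le_sup_right
    | succ k ih => exact ih.trans (sup_le le_sup_left (h k))
  simpa [hn] using le_sup n

theorem mem_span_singleton_sup_iff {R M : Type*} [Ring R] [AddCommGroup M] [Module R M]
    {P : Submodule R M} {u x : M} : x ∈ R ∙ u ⊔ P ↔ ∃ c : R, x - c • u ∈ P := by
  simp only [mem_sup, mem_span_singleton]
  constructor
  · rintro ⟨_, ⟨c, rfl⟩, p, hp, rfl⟩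
    exact ⟨c, by simpa using hp⟩
  · rintro ⟨c, hc⟩
    exact ⟨c • u, ⟨c, rfl⟩, _, hc, add_sub_cancel _ _⟩

variable {K V : Type*} [Field K] [AddCommGroup V] [Module K V] {P Q : Submodule K V}

theorem span_singleton_sup_eq_of_covBy (h : P ⋖ Q) {u : V} (huQ : u ∈ Q) (huP : u ∉ P) :
    K ∙ u ⊔ P = Q :=
  (h.eq_or_eq le_sup_right (sup_le (by simpa using huQ) h.le)).resolve_left
    fun hP => huP (hP ▸ mem_sup_left (mem_span_singleton_self u))

theorem covBy_of_finrank_eq_succ [FiniteDimensional K V] (hPQ : P ≤ Q)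
    (h : finrank K Q = finrank K P + 1) : P ⋖ Q := by
  refine ⟨lt_of_le_of_ne hPQ (by rintro rfl; omega), fun S hPS hSQ => ?_⟩
  have := finrank_lt_finrank_of_lt hPS
  have := finrank_lt_finrank_of_lt hSQ
  omega

end LinearAlgebra

section DescendingSeries

variable {K A : Type*} [CommRing K] [AddCommGroup A] [Module K A] {mul : A →ₗ[K] A →ₗ[K] A}

theorem mem_zpow_one (x : A) : x ∈ zpow mul 1 := mem_top

theorem mul_mem_zpow_succ (a : A) {b : A} {k : ℕ} (hb : b ∈ zpow mul k) :
    mul a b ∈ zpow mul (k + 1) := by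
  cases k with
  | zero => exact mem_zpow_one _
  | succ k => exact subset_span ⟨a, b, hb, rfl⟩

theorem zpow_add_two_le_iff {k : ℕ} {S : Submodule K A} :
    zpow mul (k + 2) ≤ S ↔ ∀ a : A, ∀ b ∈ zpow mul (k + 1), mul a b ∈ S := by
  rw [zpow, span_le]
  exact ⟨fun h a b hb => h ⟨a, b, hb, rfl⟩, by rintro h _ ⟨a, b, hb, rfl⟩; exact h a b hb⟩

theorem zpow_antitone (mul : A →ₗ[K] A →ₗ[K] A) : Antitone (zpow mul) := by
  refine antitone_nat_of_succ_le fun k => ?_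
  induction k with
  | zero => exact le_top
  | succ k ih =>
    cases k with
    | zero => exact le_top
    | succ k => exact zpow_add_two_le_iff.2 fun a b hb => mul_mem_zpow_succ a (ih hb)

theorem mul_mem_zpow_two (x y : A) : mul x y ∈ zpow mul 2 :=
  mul_mem_zpow_succ x (mem_zpow_one y)

theorem IsZinbiel.mul_mem_zpow_add (hz : IsZinbiel mul) {i j : ℕ} {x y : A}
    (hx : x ∈ zpow mul i) (hy : y ∈ zpow mul j) : mul x y ∈ zpow mul (i + j) := by
  induction hs : i + j generalizing i j x y with
  | zero => exact mem_top
  | succ s ih =>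
    match i, hx with
    | 0, _ => exact hs ▸ zpow_antitone mul (by omega) (mul_mem_zpow_succ x hy)
    | 1, _ => exact hs ▸ zpow_antitone mul (by omega) (mul_mem_zpow_succ x hy)
    | i + 2, hx =>
      suffices zpow mul (i + 2) ≤ (zpow mul (s + 1)).comap (mul.flip y) from this hx
      refine zpow_add_two_le_iff.2 fun a b hb => ?_
      rw [mem_comap, LinearMap.flip_apply, hz, ← map_add]
      exact mul_mem_zpow_succ a (add_mem (ih hb hy (by omega)) (ih hy hb (by omega)))

theorem IsZinbiel.eq_top_of_sup_zpow_two_eq_top (hz : IsZinbiel mul) {S : Submodule K A}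
    (hmul : map₂ mul S S ≤ S) (htop : S ⊔ zpow mul 2 = ⊤) {n : ℕ} (hn : zpow mul (n + 1) = ⊥) :
    S = ⊤ := by
  refine top_le_iff.1 <|
    le_of_forall_le_sup_succ (P := fun k => zpow mul (k + 1)) (fun k => ?_) hn
  induction k with
  | zero => exact htop.ge
  | succ k ih =>
    refine zpow_add_two_le_iff.2 fun x y hy => ?_
    obtain ⟨s, hs, x', hx', rfl⟩ := mem_sup.1 (htop.ge (mem_top (x := x)))
    obtain ⟨t, ht, y', hy', rfl⟩ := mem_sup.1 (ih hy)
    have hx'y : mul x' (t + y') ∈ zpow mul (k + 1 + 2) := by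
      convert hz.mul_mem_zpow_add hx' hy using 2
      omega
    have expand : mul (s + x') (t + y') = mul s t + (mul s y' + mul x' (t + y')) := by
      rw [map_add mul, LinearMap.add_apply, map_add (mul s), add_assoc]
    rw [expand]
    exact add_mem_sup (hmul (apply_mem_map₂ mul hs ht))
      (add_mem (mul_mem_zpow_succ s hy') hx'y)

theorem IsZinbiel.mul_mul_self_mem_zpow_five (hz : IsZinbiel mul)
    (hsq : ∀ x, mul x x ∈ zpow mul 3) (x : A) {w : A} (hw : w ∈ zpow mul 2) :
    mul x (mul x w) ∈ zpow mul 5 := by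
  have symm_mem (y z : A) : mul y z + mul z y ∈ zpow mul 3 := by
    convert sub_mem (sub_mem (hsq (y + z)) (hsq y)) (hsq z) using 1
    simp only [map_add, LinearMap.add_apply]
    abel
  have mul_mem_four : mul w x ∈ zpow mul 4 := by
    suffices zpow mul 2 ≤ (zpow mul 4).comap (mul.flip x) from this hw
    refine zpow_add_two_le_iff.2 fun y z _ => ?_
    rw [mem_comap, LinearMap.flip_apply, hz, ← map_add]
    exact mul_mem_zpow_succ y (symm_mem z x)
  have h := hz.mul_mem_zpow_add (hsq x) hw
  rw [hz] at h
  exact (Submodule.add_mem_iff_left _ (mul_mem_zpow_succ x mul_mem_four)).1 h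

end DescendingSeries

section LeftPow

/-- The left-normed power `a ∘ (a ∘ ⋯ (a ∘ a))` with `k + 1` factors, so that `leftPow mul a k` is
the element written `a^{k+1}` on paper; the shift matches the indexing of bases by `Fin n`. -/
def leftPow {K A : Type*} [CommRing K] [AddCommGroup A] [Module K A]
    (mul : A →ₗ[K] A →ₗ[K] A) (a : A) (k : ℕ) : A :=
  (mul a)^[k] a

section CommRing

variable {K A : Type*} [CommRing K] [AddCommGroup A] [Module K A] {mul : A →ₗ[K] A →ₗ[K] A}

@[simp]
theorem leftPow_zero (a : A) : leftPow mul a 0 = a := rfl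

theorem leftPow_succ (a : A) (k : ℕ) : leftPow mul a (k + 1) = mul a (leftPow mul a k) :=
  Function.iterate_succ_apply' _ _ _

theorem leftPow_mem_zpow (a : A) (k : ℕ) : leftPow mul a k ∈ zpow mul (k + 1) := by
  induction k with
  | zero => exact mem_zpow_one a
  | succ k ih => exact leftPow_succ (mul := mul) a k ▸ mul_mem_zpow_succ a ih

theorem leftPow_eq_zero_of_zpow_eq_bot {n k : ℕ} (hn : zpow mul n = ⊥) (hk : n ≤ k + 1) (a : A) :
    leftPow mul a k = 0 :=
  (mem_bot K).1 (hn ▸ zpow_antitone mul hk (leftPow_mem_zpow a k))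

theorem IsZinbiel.leftPow_mul_leftPow (hz : IsZinbiel mul) (a : A) (i j : ℕ) :
    mul (leftPow mul a i) (leftPow mul a j) =
      ((i + j + 1).choose (j + 1) : K) • leftPow mul a (i + j + 1) := by
  induction hs : i + j generalizing i j with
  | zero =>
    obtain ⟨rfl, rfl⟩ : i = 0 ∧ j = 0 := by omega
    simp [leftPow_succ]
  | succ s ih =>
    cases i with
    | zero =>
      obtain rfl : j = s + 1 := by omega
      simp [leftPow_succ]
    | succ i =>
      have pascal :
          (s + 1 + 1).choose (j + 1) = (s + 1).choose (j + 1) + (s + 1).choose (i + 1) := by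
        rw [Nat.choose_succ_succ, add_comm,
          Nat.choose_symm_of_eq_add (by omega : s + 1 = j + (i + 1))]
      rw [leftPow_succ, hz, ih i j (by omega), ih j i (by omega), ← map_add, ← add_smul, map_smul,
        ← leftPow_succ, pascal, Nat.cast_add]

theorem IsZinbiel.mul_mul_leftPow (hz : IsZinbiel mul) (x a : A) (k : ℕ) :
    mul (mul x a) (leftPow mul a k) = (k + 2 : K) • mul x (leftPow mul a (k + 1)) := by
  have hpow := hz.leftPow_mul_leftPow a k 0
  rw [leftPow_zero, zero_add, Nat.choose_one_right] at hpow
  rw [hz, hpow, ← leftPow_succ, map_smul]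
  push_cast
  module

end CommRing

variable {K A : Type*} [Field K] [CharZero K] [AddCommGroup A] [Module K A]
  {mul : A →ₗ[K] A →ₗ[K] A}

theorem IsZinbiel.mul_leftPow_sub_smul_mem (hz : IsZinbiel mul) {x a : A} {c : K}
    (h : mul x a - c • mul a a ∈ zpow mul 3) (k : ℕ) :
    mul x (leftPow mul a (k + 1)) - c • leftPow mul a (k + 2) ∈ zpow mul (k + 4) := by
  have hk : (k + 2 : K) ≠ 0 := by exact_mod_cast (k + 1).succ_ne_zero
  rw [← smul_mem_iff _ hk]
  have expand : mul (mul x a - c • mul a a) (leftPow mul a k) =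
      (k + 2 : K) • (mul x (leftPow mul a (k + 1)) - c • leftPow mul a (k + 2)) := by
    rw [map_sub, map_smul, LinearMap.sub_apply, LinearMap.smul_apply, hz.mul_mul_leftPow,
      hz.mul_mul_leftPow, leftPow_succ a (k + 1), smul_sub, smul_comm]
  rw [← expand, show k + 4 = 3 + (k + 1) by omega]
  exact hz.mul_mem_zpow_add h (leftPow_mem_zpow a k)

theorem IsZinbiel.zpow_le_span_leftPow_sup (hz : IsZinbiel mul) {a : A}
    (ha : zpow mul 2 ≤ K ∙ mul a a ⊔ zpow mul 3) (k : ℕ) :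
    zpow mul (k + 2) ≤ K ∙ leftPow mul a (k + 1) ⊔ zpow mul (k + 3) := by
  induction k with
  | zero => exact ha
  | succ k ih =>
    refine zpow_add_two_le_iff.2 fun x y hy => mem_span_singleton_sup_iff.2 ?_
    obtain ⟨c, hc⟩ := mem_span_singleton_sup_iff.1 (ha (mul_mem_zpow_two x a))
    obtain ⟨r, hr⟩ := mem_span_singleton_sup_iff.1 (ih hy)
    refine ⟨r * c, ?_⟩
    convert add_mem (mul_mem_zpow_succ x hr)
      (smul_mem _ r (hz.mul_leftPow_sub_smul_mem hc k)) using 1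
    rw [map_sub, map_smul]
    module

theorem IsZinbiel.zpow_two_le_map_mul (hz : IsZinbiel mul) {a : A}
    (ha : zpow mul 2 ≤ K ∙ mul a a ⊔ zpow mul 3) {n : ℕ} (hn : zpow mul (n + 2) = ⊥) :
    zpow mul 2 ≤ (K ∙ a ⊔ zpow mul 2).map (mul a) := by
  refine le_of_forall_le_sup_succ (P := fun k => zpow mul (k + 2)) (fun k => ?_) hn
  refine (hz.zpow_le_span_leftPow_sup ha k).trans (sup_le_sup_right ?_ _)
  rw [span_singleton_le_iff_mem, leftPow_succ]
  refine mem_map_of_mem ?_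
  cases k with
  | zero => exact mem_sup_left (mem_span_singleton_self a)
  | succ k => exact mem_sup_right (zpow_antitone mul (by omega) (leftPow_mem_zpow a (k + 1)))

-- Left multiplication by `a` maps `A^{k+1}` onto `A^{k+2}` modulo `A^{k+3}`, so it cannot kill
-- a generator of `A^{k+1}` modulo `A^{k+2}`.
theorem IsZinbiel.mem_zpow_succ_of_mul_mem (hz : IsZinbiel mul) {a : A}
    (ha : zpow mul 2 ≤ K ∙ mul a a ⊔ zpow mul 3) {k : ℕ}
    (hcov : zpow mul (k + 2) ⋖ zpow mul (k + 1)) (hlt : zpow mul (k + 3) < zpow mul (k + 2))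
    {x : A} (hx : x ∈ zpow mul (k + 1)) (hax : mul a x ∈ zpow mul (k + 3)) :
    x ∈ zpow mul (k + 2) := by
  by_contra hx'
  refine hlt.not_ge ((hz.zpow_le_span_leftPow_sup ha k).trans (sup_le ?_ le_rfl))
  rw [span_singleton_le_iff_mem, leftPow_succ]
  have hpow := leftPow_mem_zpow (mul := mul) a k
  rw [← span_singleton_sup_eq_of_covBy hcov hx hx'] at hpow
  obtain ⟨c, hc⟩ := mem_span_singleton_sup_iff.1 hpow
  convert add_mem (mul_mem_zpow_succ a hc) (smul_mem _ c hax) using 1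
  rw [map_sub, map_smul, sub_add_cancel]

end LeftPow

section Filiform

variable {K A : Type*} [Field K] [AddCommGroup A] [Module K A] {mul : A →ₗ[K] A →ₗ[K] A}

-- Otherwise `x ∘ (x ∘ w) ∈ A^5` for all `w ∈ A^2`. Fix `x ∘ w` generating the line `A^3/A^4`; then
-- `x ∘ A^3 ≤ A^5`, and polarization gives `y ∘ (x ∘ w) ∈ A^5` for every `y`, whence `A^4 ≤ A^5`.
theorem IsZinbiel.exists_mul_self_notMem_zpow_three (hz : IsZinbiel mul)
    (hcov : zpow mul 4 ⋖ zpow mul 3) (hlt : zpow mul 5 < zpow mul 4) :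
    ∃ a, mul a a ∉ zpow mul 3 := by
  by_contra! hsq
  have mul_mul_self_mem (x : A) {w : A} (hw : w ∈ zpow mul 2) : mul x (mul x w) ∈ zpow mul 5 :=
    hz.mul_mul_self_mem_zpow_five hsq x hw
  have mul_mul_symm_mem (x y : A) {w : A} (hw : w ∈ zpow mul 2) :
      mul x (mul y w) + mul y (mul x w) ∈ zpow mul 5 := by
    convert sub_mem (sub_mem (mul_mul_self_mem (x + y) hw) (mul_mul_self_mem x hw))
      (mul_mul_self_mem y hw) using 1
    simp only [map_add, LinearMap.add_apply]
    abel
  obtain ⟨x, w, hw, hxw⟩ : ∃ x, ∃ w ∈ zpow mul 2, mul x w ∉ zpow mul 4 := by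
    by_contra! h
    exact hcov.lt.not_ge (zpow_add_two_le_iff.2 h)
  have zpow_three_eq := span_singleton_sup_eq_of_covBy hcov (mul_mem_zpow_succ x hw) hxw
  have mul_mem_five {y v : A} (hy : mul y (mul x w) ∈ zpow mul 5) (hv : v ∈ zpow mul 3) :
      mul y v ∈ zpow mul 5 := by
    obtain ⟨c, hc⟩ := mem_span_singleton_sup_iff.1 (zpow_three_eq.ge hv)
    convert add_mem (mul_mem_zpow_succ y hc) (smul_mem _ c hy) using 1
    rw [map_sub, map_smul, sub_add_cancel]
  refine hlt.not_ge (zpow_add_two_le_iff.2 fun y v hv => mul_mem_five ?_ hv)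
  exact (Submodule.add_mem_iff_right _ <| mul_mem_five (mul_mul_self_mem x hw)
    (mul_mem_zpow_succ y hw)).1 (mul_mul_symm_mem x y hw)

/-- An `n`-dimensional filiform algebra: `dim A = n` and `dim A^i = n - i` for `2 ≤ i ≤ n`. -/
def IsFiliform (mul : A →ₗ[K] A →ₗ[K] A) (n : ℕ) : Prop :=
  finrank K A = n ∧ ∀ i, 2 ≤ i → i ≤ n → finrank K (zpow mul i) = n - i

namespace IsFiliform

variable [FiniteDimensional K A] {n : ℕ}

theorem zpow_eq_bot (hfil : IsFiliform mul n) (hn : 2 ≤ n) : zpow mul n = ⊥ :=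
  finrank_eq_zero.1 (by rw [hfil.2 n hn le_rfl, Nat.sub_self])

theorem zpow_succ_covBy (hfil : IsFiliform mul n) {i : ℕ} (hi : 2 ≤ i) (hin : i < n) :
    zpow mul (i + 1) ⋖ zpow mul i := by
  refine covBy_of_finrank_eq_succ (zpow_antitone mul i.le_succ) ?_
  rw [hfil.2 i hi hin.le, hfil.2 (i + 1) (by omega) hin]
  omega

theorem span_singleton_sup_zpow_two_covBy_top (hfil : IsFiliform mul n) (hn : 2 ≤ n) {a : A}
    (ha : a ∉ zpow mul 2) : K ∙ a ⊔ zpow mul 2 ⋖ ⊤ := by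
  refine covBy_of_finrank_eq_succ le_top ?_
  rw [sup_comm, finrank_sup_span_singleton ha, finrank_top, hfil.1, hfil.2 2 le_rfl hn]
  omega

end IsFiliform

end Filiform

section AdaptedPair

/-- A pair `(a, f)` generating the algebra modulo `A^2` such that `A^{m+2} = 0`, `a ∘ f = 0`,
`f ∘ a = α a^{m+1}` and `f ∘ f = β a^{m+1}`. In dimension `m + 2` it determines the whole
multiplication table: `f` is the vector `e_{m+2}` and `a, a^2, …, a^{m+1}` are `e_1, …, e_{m+1}`. -/
structure IsAdaptedPair {K A : Type*} [CommRing K] [AddCommGroup A] [Module K A]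
    (mul : A →ₗ[K] A →ₗ[K] A) (m : ℕ) (a f : A) (α β : K) : Prop where
  zpow_eq_bot : zpow mul (m + 2) = ⊥
  span_sup_eq_top : span K {a, f} ⊔ zpow mul 2 = ⊤
  mul_left : mul a f = 0
  mul_right : mul f a = α • leftPow mul a m
  mul_self : mul f f = β • leftPow mul a m

theorem span_pair_sup_eq_top_of_mem {R M : Type*} [Semiring R] [AddCommMonoid M] [Module R M]
    {P S : Submodule R M} {a f : M} (h : span R {a, f} ⊔ P = ⊤) (ha : a ∈ S) (hf : f ∈ S)
    (hP : P ≤ S) : S = ⊤ :=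
  top_le_iff.1 (h.ge.trans (sup_le (span_le.2 (Set.pair_subset ha hf)) hP))

variable {K A : Type*} [Field K] [AddCommGroup A] [Module K A] {mul : A →ₗ[K] A →ₗ[K] A}

section CharZero

variable [CharZero K]

theorem IsFiliform.exists_mul_eq_zero [FiniteDimensional K A] {m : ℕ}
    (hfil : IsFiliform mul (m + 2)) (hz : IsZinbiel mul) {a : A} (haa : mul a a ∉ zpow mul 3)
    (ha : zpow mul 2 ≤ K ∙ mul a a ⊔ zpow mul 3) :
    ∃ f, mul a f = 0 ∧ span K {a, f} ⊔ zpow mul 2 = ⊤ := by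
  have hcov := hfil.span_singleton_sup_zpow_two_covBy_top (by omega)
    fun h : a ∈ zpow mul 2 => haa (mul_mem_zpow_succ a h)
  obtain ⟨d, -, hd⟩ := SetLike.exists_of_lt hcov.lt
  obtain ⟨u, hu, hau⟩ :=
    hz.zpow_two_le_map_mul ha (hfil.zpow_eq_bot (by omega)) (mul_mem_zpow_two a d)
  refine ⟨d - u, by rw [map_sub, hau, sub_self], ?_⟩
  rw [Set.pair_comm, span_insert, sup_assoc]
  exact span_singleton_sup_eq_of_covBy hcov mem_top fun h => hd ((sub_mem_iff_left _ hu).1 h)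

theorem IsFiliform.exists_eq_smul_leftPow_of_mul_eq_zero [FiniteDimensional K A] {m : ℕ}
    (hfil : IsFiliform mul (m + 2)) (hz : IsZinbiel mul) (hm : 1 ≤ m) {a : A}
    (ha : zpow mul 2 ≤ K ∙ mul a a ⊔ zpow mul 3) {x : A} (hx : x ∈ zpow mul 2)
    (hax : mul a x = 0) : ∃ c : K, x = c • leftPow mul a m := by
  obtain ⟨m, rfl⟩ := Nat.exists_eq_add_of_le' hm
  have mem_zpow (k : ℕ) (hk : k ≤ m) : x ∈ zpow mul (k + 2) := by
    induction k with
    | zero => exact hx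
    | succ k ih =>
      exact hz.mem_zpow_succ_of_mul_mem ha (hfil.zpow_succ_covBy (by omega) (by omega))
        (hfil.zpow_succ_covBy (by omega) (by omega)).lt (ih (by omega)) (hax ▸ zero_mem _)
  obtain ⟨c, hc⟩ :=
    mem_span_singleton_sup_iff.1 (hz.zpow_le_span_leftPow_sup ha m (mem_zpow m le_rfl))
  rw [hfil.zpow_eq_bot (by omega)] at hc
  exact ⟨c, sub_eq_zero.1 ((mem_bot K).1 hc)⟩

theorem IsFiliform.exists_isAdaptedPair [FiniteDimensional K A] {m : ℕ}
    (hfil : IsFiliform mul (m + 2)) (hz : IsZinbiel mul) (hm : 3 ≤ m) :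
    ∃ a f α β, IsAdaptedPair mul m a f α β := by
  obtain ⟨a, haa⟩ := hz.exists_mul_self_notMem_zpow_three
    (hfil.zpow_succ_covBy (by omega) (by omega)) (hfil.zpow_succ_covBy (by omega) (by omega)).lt
  have ha : zpow mul 2 ≤ K ∙ mul a a ⊔ zpow mul 3 :=
    (span_singleton_sup_eq_of_covBy (hfil.zpow_succ_covBy le_rfl (by omega))
      (mul_mem_zpow_two a a) haa).ge
  obtain ⟨f, haf, hspan⟩ := hfil.exists_mul_eq_zero hz haa ha
  have mul_mul_left : mul a (mul f a) = 0 := by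
    simpa [haf] using (hz a f a).symm
  have mul_mul_self : mul a (mul f f) = 0 := by
    simpa [haf, ← two_smul K] using (hz a f f).symm
  obtain ⟨α, hα⟩ := hfil.exists_eq_smul_leftPow_of_mul_eq_zero hz (by omega) ha
    (mul_mem_zpow_two f a) mul_mul_left
  obtain ⟨β, hβ⟩ := hfil.exists_eq_smul_leftPow_of_mul_eq_zero hz (by omega) ha
    (mul_mem_zpow_two f f) mul_mul_self
  exact ⟨a, f, α, β, hfil.zpow_eq_bot (by omega), hspan, haf, hα, hβ⟩

end CharZero

namespace IsAdaptedPair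

variable {m : ℕ} {a f : A} {α β : K}

theorem leftPow_eq_zero (h : IsAdaptedPair mul m a f α β) {k : ℕ} (hk : m < k) :
    leftPow mul a k = 0 :=
  leftPow_eq_zero_of_zpow_eq_bot h.zpow_eq_bot (by omega) a

theorem sum_ite_smul_leftPow (h : IsAdaptedPair mul m a f α β) (s : ℕ) (x : K) :
    ∑ k : Fin (m + 1), (if s = k then x else 0) • leftPow mul a k = x • leftPow mul a s := by
  rw [Fin.sum_univ_eq_sum_range fun k => (if s = k then x else 0) • leftPow mul a k]
  by_cases hs : s < m + 1
  · simp [ite_smul, hs]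
  · simp [ite_smul, hs, h.leftPow_eq_zero (by omega : m < s)]

theorem smul_right (h : IsAdaptedPair mul m a f α β) {c : K} (hc : c ≠ 0) :
    IsAdaptedPair mul m a (c • f) (c * α) (c ^ 2 * β) where
  zpow_eq_bot := h.zpow_eq_bot
  span_sup_eq_top := span_pair_sup_eq_top_of_mem h.span_sup_eq_top
    (mem_sup_left (subset_span (by simp)))
    (mem_sup_left ((smul_mem_iff _ hc).1 (subset_span (by simp)))) le_sup_right
  mul_left := by rw [map_smul, h.mul_left, smul_zero]
  mul_right := by rw [map_smul, LinearMap.smul_apply, h.mul_right, mul_smul]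
  mul_self := by
    rw [map_smul, map_smul, LinearMap.smul_apply, h.mul_self, smul_smul, smul_smul, sq]

variable [CharZero K]

theorem mul_leftPow_succ (h : IsAdaptedPair mul m a f α β) (hz : IsZinbiel mul) (k : ℕ) :
    mul f (leftPow mul a (k + 1)) = 0 := by
  have hk : (k + 2 : K) ≠ 0 := by exact_mod_cast (k + 1).succ_ne_zero
  rw [← smul_eq_zero_iff_right hk, ← hz.mul_mul_leftPow, h.mul_right, map_smul,
    LinearMap.smul_apply, hz.leftPow_mul_leftPow, h.leftPow_eq_zero (by omega), smul_zero,
    smul_zero]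

theorem leftPow_mul (h : IsAdaptedPair mul m a f α β) (hz : IsZinbiel mul) (k : ℕ) :
    mul (leftPow mul a k) f = 0 := by
  induction k with
  | zero => exact h.mul_left
  | succ k ih =>
    rw [leftPow_succ, hz, ih, map_zero, zero_add]
    cases k with
    | zero =>
      rw [leftPow_zero, h.mul_right, map_smul, ← leftPow_succ, h.leftPow_eq_zero m.lt_succ_self,
        smul_zero]
    | succ k => rw [h.mul_leftPow_succ hz, map_zero]

theorem leftPow_add_smul (h : IsAdaptedPair mul (m + 1) a f α β) (hz : IsZinbiel mul) (t : K)
    (k : ℕ) : leftPow mul (a + t • f) (k + 2) = leftPow mul a (k + 2) := by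
  have add_smul_mul_leftPow (j : ℕ) :
      mul (a + t • f) (leftPow mul a (j + 1)) = leftPow mul a (j + 2) := by
    rw [map_add, map_smul, LinearMap.add_apply, LinearMap.smul_apply, h.mul_leftPow_succ hz,
      smul_zero, add_zero, ← leftPow_succ]
  induction k with
  | zero =>
    have square : mul (a + t • f) (a + t • f) =
        leftPow mul a 1 + (t * α + t * t * β) • leftPow mul a (m + 1) := by
      simp only [map_add, map_smul, LinearMap.add_apply, LinearMap.smul_apply, h.mul_left,
        h.mul_right, h.mul_self, leftPow_succ a 0, leftPow_zero]
      module
    rw [leftPow_succ, leftPow_succ, leftPow_zero, square, map_add, map_smul,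
      add_smul_mul_leftPow, add_smul_mul_leftPow, h.leftPow_eq_zero (by omega : m + 1 < m + 2),
      smul_zero, add_zero]
  | succ k ih => rw [leftPow_succ, ih, add_smul_mul_leftPow]

-- The correction of `f` is forced: `(a + t f) ∘ f = t β a^{m+3}` must be cancelled by
-- `(a + t f) ∘ a^{m+2} = a^{m+3}`.
theorem add_smul_left (h : IsAdaptedPair mul (m + 2) a f α β) (hz : IsZinbiel mul) (t : K) :
    IsAdaptedPair mul (m + 2) (a + t • f) (f - (t * β) • leftPow mul a (m + 1))
      (α - (m + 1) * t * β) β where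
  zpow_eq_bot := h.zpow_eq_bot
  span_sup_eq_top := by
    set S := span K {a + t • f, f - (t * β) • leftPow mul a (m + 1)} ⊔ zpow mul 2
    have hpow : (t * β) • leftPow mul a (m + 1) ∈ S :=
      mem_sup_right (smul_mem _ _ (zpow_antitone mul (by omega) (leftPow_mem_zpow a (m + 1))))
    have hf : f ∈ S := (sub_mem_iff_left _ hpow).1 (mem_sup_left (subset_span (by simp)))
    have ha : a ∈ S :=
      (add_mem_cancel_right (smul_mem _ t hf)).1 (mem_sup_left (subset_span (by simp)))
    exact span_pair_sup_eq_top_of_mem h.span_sup_eq_top ha hf le_sup_right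
  mul_left := by
    simp only [map_add, map_sub, map_smul, LinearMap.add_apply, LinearMap.smul_apply, h.mul_left,
      h.mul_self, h.mul_leftPow_succ hz, ← leftPow_succ]
    module
  mul_right := by
    have hpow := hz.leftPow_mul_leftPow a (m + 1) 0
    rw [leftPow_zero, zero_add, Nat.choose_one_right] at hpow
    rw [h.leftPow_add_smul hz]
    simp only [map_add, map_sub, map_smul, LinearMap.sub_apply, LinearMap.smul_apply, h.mul_right,
      h.mul_self, h.leftPow_mul hz, hpow]
    push_cast
    module
  mul_self := by
    rw [h.leftPow_add_smul hz]
    simp only [map_sub, map_smul, LinearMap.sub_apply, LinearMap.smul_apply, h.mul_self,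
      h.leftPow_mul hz, h.mul_leftPow_succ hz, hz.leftPow_mul_leftPow,
      h.leftPow_eq_zero (by omega : m + 2 < m + 1 + (m + 1) + 1), smul_zero, sub_zero]

theorem exists_normalized (h : IsAdaptedPair mul (m + 2) a f α β) (hz : IsZinbiel mul)
    (hsq : ∀ x : K, IsSquare x) :
    (∃ a f, IsAdaptedPair mul (m + 2) a f 0 0) ∨ (∃ a f, IsAdaptedPair mul (m + 2) a f 1 0) ∨
      ∃ a f, IsAdaptedPair mul (m + 2) a f 0 1 := by
  by_cases hβ : β = 0
  · subst hβ
    by_cases hα : α = 0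
    · subst hα
      exact .inl ⟨a, f, h⟩
    · exact .inr (.inl ⟨a, α⁻¹ • f, by simpa [hα] using h.smul_right (inv_ne_zero hα)⟩)
  · obtain ⟨r, rfl⟩ := hsq β
    have hr : r ≠ 0 := by simpa using hβ
    have hm : (m + 1 : K) ≠ 0 := Nat.cast_add_one_ne_zero m
    have sheared := h.add_smul_left hz (α / ((m + 1) * (r * r)))
    have scaled := sheared.smul_right (inv_ne_zero hr)
    have hα : r⁻¹ * (α - (m + 1) * (α / ((m + 1) * (r * r))) * (r * r)) = 0 := by
      field_simp
      ring
    have hβ : r⁻¹ ^ 2 * (r * r) = 1 := by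
      field_simp
    rw [hα, hβ] at scaled
    exact .inr (.inr ⟨_, _, scaled⟩)

end IsAdaptedPair

end AdaptedPair

section StructureConstants

/-- The algebra has a basis in which its structure constants are `c`. -/
def HasStructureConstants {ι K A : Type*} [Fintype ι] [CommRing K] [AddCommGroup A] [Module K A]
    (mul : A →ₗ[K] A →ₗ[K] A) (c : ι → ι → ι → K) : Prop :=
  ∃ b : Basis ι K A, ∀ i j, mul (b i) (b j) = ∑ k, c i j k • b k

theorem HasStructureConstants.isom_mulOf {A : Type*} [AddCommGroup A] [Module ℂ A]
    {mul : A →ₗ[ℂ] A →ₗ[ℂ] A} {n : ℕ} {c : Fin n → Fin n → Fin n → ℂ}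
    (h : HasStructureConstants mul c) : Isom mul (mulOf n c) := by
  obtain ⟨b, hb⟩ := h
  suffices mul.compr₂ b.equivFun.toLinearMap =
      (mulOf n c).compl₁₂ b.equivFun.toLinearMap b.equivFun.toLinearMap from
    ⟨b.equivFun, LinearMap.congr_fun₂ this⟩
  refine LinearMap.ext_basis b b fun i j => ?_
  ext k
  simp [hb, mulOf, Finsupp.single_apply]

/-- Structure constants of the algebra obtained from `F_n^1` by adding `e_n ∘ e_1 = α e_{n-1}` and
`e_n ∘ e_n = β e_{n-1}`, over any coefficients; `F_n^1`, `F_n^2`, `F_n^3` are the cases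
`(α, β) = (0, 0), (1, 0), (0, 1)`. -/
def filiformConstants {K : Type*} [CommRing K] (n : ℕ) (α β : K) (i j k : Fin n) : K :=
  (if (i : ℕ) + j + 1 = k ∧ (k : ℕ) + 1 ≤ n - 1 then
    (((i : ℕ) + j + 1).choose ((j : ℕ) + 1) : K) else 0) +
  (if (i : ℕ) = n - 1 ∧ (j : ℕ) = 0 ∧ (k : ℕ) = n - 2 then α else 0) +
  (if (i : ℕ) = n - 1 ∧ (j : ℕ) = n - 1 ∧ (k : ℕ) = n - 2 then β else 0)

theorem filiformConstants_zero_zero (n : ℕ) : filiformConstants n 0 0 = F1c n := by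
  ext i j k
  simp [filiformConstants, F1c]

theorem filiformConstants_one_zero (n : ℕ) : filiformConstants n 1 0 = F2c n := by
  ext i j k
  simp [filiformConstants, F2c, F1c]

theorem filiformConstants_zero_one (n : ℕ) : filiformConstants n 0 1 = F3c n := by
  ext i j k
  simp [filiformConstants, F3c, F1c]

section Values

variable {K : Type*} [CommRing K] {m : ℕ} (α β : K) (i j k : Fin (m + 1))

theorem filiformConstants_castSucc_castSucc :
    filiformConstants (m + 2) α β i.castSucc j.castSucc k.castSucc =
      if (i + j + 1 : ℕ) = k then ((i + j + 1 : ℕ).choose (j + 1) : K) else 0 := by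
  simp [filiformConstants, i.isLt.ne, j.isLt.ne, k.is_le]

theorem filiformConstants_castSucc_last :
    filiformConstants (m + 2) α β i.castSucc (Fin.last _) k.castSucc = 0 := by
  have : (i : ℕ) + (m + 1) + 1 ≠ k := by omega
  simp [filiformConstants, i.isLt.ne, this]

theorem filiformConstants_last_castSucc :
    filiformConstants (m + 2) α β (Fin.last _) j.castSucc k.castSucc =
      if m = (k : ℕ) then (if j = 0 then α else 0) else 0 := by
  have : m + 1 + (j : ℕ) + 1 ≠ k := by omega
  simp [filiformConstants, j.isLt.ne, this, eq_comm, and_comm, ite_and]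

theorem filiformConstants_last_last :
    filiformConstants (m + 2) α β (Fin.last _) (Fin.last _) k.castSucc =
      if m = (k : ℕ) then β else 0 := by
  have : m + 1 + (m + 1) + 1 ≠ (k : ℕ) := by omega
  simp [filiformConstants, this, eq_comm]

end Values

section AdaptedFamily

variable {K A : Type*} [CommRing K] [AddCommGroup A] [Module K A]

/-- The candidate basis `a, a^2, …, a^{m+1}, f` attached to an adapted pair `(a, f)`. -/
def adaptedFamily (mul : A →ₗ[K] A →ₗ[K] A) (m : ℕ) (a f : A) : Fin (m + 2) → A :=
  Fin.snoc (α := fun _ => A) (fun i : Fin (m + 1) => leftPow mul a i) f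

variable (mul : A →ₗ[K] A →ₗ[K] A) {m : ℕ} (a f : A)

theorem adaptedFamily_castSucc (i : Fin (m + 1)) :
    adaptedFamily mul m a f i.castSucc = leftPow mul a i :=
  Fin.snoc_castSucc _ _ _

theorem adaptedFamily_last : adaptedFamily mul m a f (Fin.last _) = f :=
  Fin.snoc_last _ _

end AdaptedFamily

variable {K A : Type*} [Field K] [CharZero K] [AddCommGroup A] [Module K A]
  {mul : A →ₗ[K] A →ₗ[K] A} {m : ℕ} {a f : A} {α β : K}

theorem IsAdaptedPair.adaptedFamily_mul (h : IsAdaptedPair mul m a f α β) (hz : IsZinbiel mul)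
    (i j : Fin (m + 2)) :
    mul (adaptedFamily mul m a f i) (adaptedFamily mul m a f j) =
      ∑ k, filiformConstants (m + 2) α β i j k • adaptedFamily mul m a f k := by
  have sum_eq : ∑ k, filiformConstants (m + 2) α β i j k • adaptedFamily mul m a f k =
      ∑ k : Fin (m + 1), filiformConstants (m + 2) α β i j k.castSucc • leftPow mul a k := by
    simp [Fin.sum_univ_castSucc, filiformConstants, adaptedFamily_castSucc]
  rw [sum_eq]
  induction i using Fin.lastCases with
  | last =>
    induction j using Fin.lastCases with
    | last =>
      simp_rw [adaptedFamily_last, filiformConstants_last_last, h.sum_ite_smul_leftPow]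
      exact h.mul_self
    | cast j =>
      simp_rw [adaptedFamily_last, adaptedFamily_castSucc, filiformConstants_last_castSucc,
        h.sum_ite_smul_leftPow]
      obtain rfl | ⟨j, rfl⟩ := j.eq_zero_or_eq_succ
      · simpa using h.mul_right
      · simpa using h.mul_leftPow_succ hz j
  | cast i =>
    induction j using Fin.lastCases with
    | last =>
      simpa [adaptedFamily_last, adaptedFamily_castSucc, filiformConstants_castSucc_last] using
        h.leftPow_mul hz i
    | cast j =>
      simp_rw [adaptedFamily_castSucc, filiformConstants_castSucc_castSucc,
        h.sum_ite_smul_leftPow]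
      exact hz.leftPow_mul_leftPow a i j

theorem IsAdaptedPair.span_range_adaptedFamily (h : IsAdaptedPair mul m a f α β)
    (hz : IsZinbiel mul) : span K (Set.range (adaptedFamily mul m a f)) = ⊤ := by
  refine hz.eq_top_of_sup_zpow_two_eq_top ?_ ?_ h.zpow_eq_bot
  · rw [map₂_span_span, span_le]
    rintro _ ⟨_, ⟨i, rfl⟩, _, ⟨j, rfl⟩, rfl⟩
    beta_reduce
    rw [h.adaptedFamily_mul hz]
    exact sum_mem fun k _ => smul_mem _ _ (subset_span ⟨k, rfl⟩)
  · exact span_pair_sup_eq_top_of_mem h.span_sup_eq_top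
      (mem_sup_left (subset_span ⟨0, adaptedFamily_castSucc mul a f 0⟩))
      (mem_sup_left (subset_span ⟨Fin.last _, adaptedFamily_last mul a f⟩)) le_sup_right

theorem IsAdaptedPair.hasStructureConstants (h : IsAdaptedPair mul m a f α β)
    (hz : IsZinbiel mul) (hdim : finrank K A = m + 2) :
    HasStructureConstants mul (filiformConstants (m + 2) α β) :=
  ⟨basisOfTopLeSpanOfCardEqFinrank (adaptedFamily mul m a f) (h.span_range_adaptedFamily hz).ge
    (by simp [hdim]), by simpa using h.adaptedFamily_mul hz⟩

end StructureConstants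

theorem filiform_classification_general {K A : Type*} [Field K] [CharZero K] [AddCommGroup A]
    [Module K A] {mul : A →ₗ[K] A →ₗ[K] A} {n : ℕ} (hsq : ∀ x : K, IsSquare x) (hn : 5 ≤ n)
    (hz : IsZinbiel mul) (hfil : IsFiliform mul n) :
    HasStructureConstants mul (filiformConstants n 0 0) ∨
      HasStructureConstants mul (filiformConstants n 1 0) ∨
      HasStructureConstants mul (filiformConstants n 0 1) := by
  have : FiniteDimensional K A := Module.finite_of_finrank_pos (by rw [hfil.1]; omega)
  obtain ⟨m, rfl⟩ := Nat.exists_eq_add_of_le' (by omega : 4 ≤ n)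
  obtain ⟨a, f, α, β, hpair⟩ := hfil.exists_isAdaptedPair hz (by omega)
  rcases hpair.exists_normalized hz hsq with ⟨a, f, h⟩ | ⟨a, f, h⟩ | ⟨a, f, h⟩
  · exact .inl (h.hasStructureConstants hz hfil.1)
  · exact .inr (.inl (h.hasStructureConstants hz hfil.1))
  · exact .inr (.inr (h.hasStructureConstants hz hfil.1))

/-- For `n ≥ 5`, every `n`-dimensional complex filiform Zinbiel algebra
is isomorphic to `F_n^1`, `F_n^2` or `F_n^3`. -/
theorem filiform_classification (n : ℕ) (hn : 5 ≤ n)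
    (A : Type*) [AddCommGroup A] [Module ℂ A] [FiniteDimensional ℂ A]
    (mul : A →ₗ[ℂ] A →ₗ[ℂ] A) (hzin : IsZinbiel mul)
    (hdim : Module.finrank ℂ A = n)
    (hfil : ∀ i : ℕ, 2 ≤ i → i ≤ n → Module.finrank ℂ (zpow mul i) = n - i) :
    Isom mul (mulOf n (F1c n)) ∨ Isom mul (mulOf n (F2c n)) ∨
      Isom mul (mulOf n (F3c n)) := by
  rw [← filiformConstants_zero_zero, ← filiformConstants_one_zero, ← filiformConstants_zero_one]
  exact (filiform_classification_general IsAlgClosed.exists_eq_mul_self hn hzin ⟨hdim, hfil⟩).imp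
    (·.isom_mulOf) (.imp (·.isom_mulOf) (·.isom_mulOf))
end

section
/- If A is a four-dimensional complex Zinbiel algebra, then the triple (dim A², dim A³, dim A⁴) is one of (3, 2, 1), (2, 1, 0), (2, 0, 0), (1, 0, 0), (0, 0, 0). -/
/-!
Write `x * y = x ∘ y + y ∘ x`. The Zinbiel identity reads `(x ∘ y) ∘ z = x ∘ (y * z)`, and it makes
`(A, *)` a commutative associative algebra. An idempotent `e` of `(A, *)` satisfies `2(e ∘ e) = e`
and `(e ∘ e) ∘ e = e ∘ e`, which force `e = 0`; hence `(A, *)` is nilpotent when `A` is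
finite-dimensional, over any field.

Suppose a nonzero ideal `B` satisfies `A ∘ B = B`, and let `I` be maximal among the ideals properly
contained in `B`. Nilpotency of `*` gives `s ∈ B \ I` with `A * s ⊆ I`, and some `d = a ∘ s` lies
outside `I`. As `d ∘ A ⊆ I`, the map `x ↦ x ∘ d` modulo `I` commutes with left and right
multiplication, and its image is `B / I` by maximality. Hence `A = A ∘ A + N` for its kernel
`N ≠ A`, which nilpotency of `*` again excludes. So the series `A¹ ⊇ A² ⊇ ⋯` decreases strictly
until it vanishes. If moreover `dim A / A² ≤ 1`, then `A` is generated by one element and every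
later quotient of the series has dimension at most one as well.
-/

section CommutativeAlgebra

theorem isNilpotent_ideal_of_forall_isIdempotentElem_eq_zero {S : Type*} [CommRing S]
    [IsArtinianRing S] (I : Ideal S) (hI : ∀ e ∈ I, IsIdempotentElem e → e = 0) :
    IsNilpotent I := by
  obtain ⟨n, hn⟩ := IsArtinian.monotone_stabilizes
    (⟨fun n => OrderDual.toDual (I ^ (n + 1)), fun _ _ h => Ideal.pow_le_pow_right (by omega)⟩ :
      ℕ →o (Ideal S)ᵒᵈ)
  have stable : IsIdempotentElem (I ^ (n + 1)) := by
    have : I ^ (n + 1) = I ^ (2 * n + 1 + 1) := hn (2 * n + 1) (by omega)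
    rw [IsIdempotentElem, ← pow_add, this]
    congr 1
    omega
  obtain ⟨e, he, hspan⟩ :=
    (Ideal.isIdempotentElem_iff_of_fg _ (IsNoetherian.noetherian _)).mp stable
  have heI : e ∈ I :=
    Ideal.pow_le_self n.succ_ne_zero (hspan ▸ Ideal.mem_span_singleton_self e)
  refine ⟨n + 1, ?_⟩
  rw [hspan, hI e heI he, Ideal.submodule_span_eq, Ideal.span_singleton_zero, Ideal.zero_eq_bot]

variable {K A : Type*} [Field K] [NonUnitalCommRing A] [Module K A] [IsScalarTower K A A]
  [SMulCommClass K A A] [FiniteDimensional K A]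

theorem isNilpotent_ker_unitization_fstHom (hA : ∀ e : A, IsIdempotentElem e → e = 0) :
    IsNilpotent (RingHom.ker (Unitization.fstHom K A)) := by
  have : FiniteDimensional K (Unitization K A) :=
    Module.Finite.equiv (Unitization.linearEquiv K K A).symm
  have : IsArtinianRing (Unitization K A) := IsArtinianRing.of_finite K _
  refine isNilpotent_ideal_of_forall_isIdempotentElem_eq_zero _ fun e he hidem => ?_
  lift e to A using he
  rw [hA e ((Unitization.isIdempotentElem_inr_iff K).mp hidem), Unitization.inr_zero]

theorem exists_mem_notMem_forall_mul_mem (hA : ∀ e : A, IsIdempotentElem e → e = 0)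
    {U I : Submodule K A} (hU : ∀ a, ∀ u ∈ U, a * u ∈ U) (hUI : ¬ U ≤ I) :
    ∃ s ∈ U, s ∉ I ∧ ∀ a, a * s ∈ I := by
  by_contra! hcon
  obtain ⟨n, hn⟩ := isNilpotent_ker_unitization_fstHom (K := K) hA
  set m := RingHom.ker (Unitization.fstHom K A) with hm
  have descend (k : ℕ) (hk : ∀ q ∈ m ^ (k + 1), ∀ u ∈ U, (q * (u : Unitization K A)).snd ∈ I) :
      ∀ q ∈ m ^ k, ∀ u ∈ U, (q * (u : Unitization K A)).snd ∈ I := by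
    intro q hq u hu
    by_contra hnot
    have hqu : (q * (u : Unitization K A)).snd ∈ U := by
      simpa using U.add_mem (U.smul_mem q.fst hu) (hU q.snd u hu)
    obtain ⟨a, ha⟩ := hcon _ hqu hnot
    have haq : (a : Unitization K A) * q ∈ m ^ (k + 1) := by
      rw [pow_succ']
      exact Ideal.mul_mem_mul (by simp [hm, RingHom.mem_ker]) hq
    exact ha (by simpa [mul_assoc] using hk _ haq u hu)
  have vanish : ∀ q ∈ m ^ 0, ∀ u ∈ U, (q * (u : Unitization K A)).snd ∈ I :=
    Nat.decreasingInduction (fun k _ => descend k) (by simp [hn]) n.zero_le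
  exact hUI fun u hu => by simpa using vanish 1 (by simp) u hu

end CommutativeAlgebra

section Ideals

variable {K A : Type*} [CommRing K] [AddCommGroup A] [Module K A]

/-- Two-sided ideals of the algebra with multiplication `mul`. -/
structure IsIdeal (mul : A →ₗ[K] A →ₗ[K] A) (B : Submodule K A) : Prop where
  mul_mem_left : ∀ a, ∀ b ∈ B, mul a b ∈ B
  mul_mem_right : ∀ b ∈ B, ∀ a, mul b a ∈ B

/-- The largest subspace `U` with `A ∘ U ⊆ I`: the annihilator of the left `A`-action on `A / I`. -/
def leftColon (mul : A →ₗ[K] A →ₗ[K] A) (I : Submodule K A) : Submodule K A :=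
  ⨅ a, I.comap (mul a)

variable {mul : A →ₗ[K] A →ₗ[K] A} {B I : Submodule K A}

theorem mem_leftColon {x : A} : x ∈ leftColon mul I ↔ ∀ a, mul a x ∈ I := by
  simp [leftColon]

theorem isIdeal_bot (mul : A →ₗ[K] A →ₗ[K] A) : IsIdeal mul ⊥ where
  mul_mem_left a b hb := by simp [(Submodule.mem_bot K).mp hb]
  mul_mem_right b hb a := by simp [(Submodule.mem_bot K).mp hb]

theorem IsIdeal.inf (hB : IsIdeal mul B) (hI : IsIdeal mul I) : IsIdeal mul (B ⊓ I) where
  mul_mem_left a b hb := ⟨hB.mul_mem_left a b hb.1, hI.mul_mem_left a b hb.2⟩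
  mul_mem_right b hb a := ⟨hB.mul_mem_right b hb.1 a, hI.mul_mem_right b hb.2 a⟩

theorem IsIdeal.le_leftColon (hI : IsIdeal mul I) : I ≤ leftColon mul I :=
  fun x hx => mem_leftColon.mpr fun a => hI.mul_mem_left a x hx

end Ideals

namespace IsZinbiel

section Identities

variable {K A : Type*} [CommRing K] [AddCommGroup A] [Module K A]
  {mul : A →ₗ[K] A →ₗ[K] A} {B I : Submodule K A}

theorem mul_right_comm (hzin : IsZinbiel mul) (x y z : A) :
    mul (mul x y) z = mul (mul x z) y := by
  rw [hzin, hzin, add_comm]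

theorem mul_mul_eq_sub (hzin : IsZinbiel mul) (x y z : A) :
    mul x (mul y z) = mul (mul x y) z - mul x (mul z y) :=
  eq_sub_of_add_eq (hzin x y z).symm

/-- The commutative associative algebra structure `x * y = x ∘ y + y ∘ x` on a Zinbiel algebra. -/
abbrev nonUnitalCommRing (hzin : IsZinbiel mul) : NonUnitalCommRing A where
  mul x y := mul x y + mul y x
  left_distrib x y z := show mul x (y + z) + mul (y + z) x =
      (mul x y + mul y x) + (mul x z + mul z x) by
    simp only [map_add, LinearMap.add_apply]; abel
  right_distrib x y z := show mul (x + y) z + mul z (x + y) =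
      (mul x z + mul z x) + (mul y z + mul z y) by
    simp only [map_add, LinearMap.add_apply]; abel
  zero_mul x := show mul 0 x + mul x 0 = 0 by simp
  mul_zero x := show mul x 0 + mul 0 x = 0 by simp
  mul_assoc x y z := show mul (mul x y + mul y x) z + mul z (mul x y + mul y x) =
      mul x (mul y z + mul z y) + mul (mul y z + mul z y) x by
    simp only [map_add, LinearMap.add_apply, hzin _ _ _]; abel
  mul_comm x y := add_comm (mul x y) (mul y x)

theorem eq_zero_of_mul_self_add_mul_self_eq (hzin : IsZinbiel mul) {e : A}
    (he : mul e e + mul e e = e) : e = 0 := by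
  have hfix : mul (mul e e) e = mul e e := by rw [hzin, ← map_add, he]
  have hself : mul e e = e := by
    calc mul e e = mul (mul e e + mul e e) e := by rw [he]
      _ = mul e e + mul e e := by rw [map_add, LinearMap.add_apply, hfix]
      _ = e := he
  simpa [hself] using he

theorem isIdeal_leftColon (hzin : IsZinbiel mul) (hI : IsIdeal mul I) :
    IsIdeal mul (leftColon mul I) where
  mul_mem_left a x hx := hI.le_leftColon (mem_leftColon.mp hx a)
  mul_mem_right x hx a := mem_leftColon.mpr fun b => by
    rw [hzin.mul_mul_eq_sub]
    exact I.sub_mem (hI.mul_mem_right _ (mem_leftColon.mp hx b) a)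
      (hI.mul_mem_left b _ (mem_leftColon.mp hx a))

theorem map₂_top_range_flip_sup_le (hzin : IsZinbiel mul) (hI : IsIdeal mul I) {d : A}
    (hd : ∀ x, mul d x ∈ I) :
    Submodule.map₂ mul ⊤ ((mul.flip d).range ⊔ I) ≤
      (Submodule.map₂ mul ⊤ ⊤).map (mul.flip d) ⊔ I := by
  refine Submodule.map₂_le.mpr fun a _ b hb => ?_
  obtain ⟨_, ⟨x, rfl⟩, i, hi, rfl⟩ := Submodule.mem_sup.mp hb
  rw [map_add, LinearMap.flip_apply, hzin.mul_mul_eq_sub, sub_add]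
  exact sub_mem
    (Submodule.mem_sup_left
      ⟨mul a x, Submodule.apply_mem_map₂ mul Submodule.mem_top Submodule.mem_top, rfl⟩)
    (Submodule.mem_sup_right (I.sub_mem (hI.mul_mem_left a _ (hd x)) (hI.mul_mem_left a i hi)))

theorem isIdeal_range_flip_sup (hzin : IsZinbiel mul) (hI : IsIdeal mul I) {d : A}
    (hd : ∀ x, mul d x ∈ I) : IsIdeal mul ((mul.flip d).range ⊔ I) where
  mul_mem_left _ _ hb := sup_le_sup_right LinearMap.map_le_range I
    (hzin.map₂_top_range_flip_sup_le hI hd (Submodule.apply_mem_map₂ mul Submodule.mem_top hb))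
  mul_mem_right b hb a := by
    obtain ⟨_, ⟨x, rfl⟩, i, hi, rfl⟩ := Submodule.mem_sup.mp hb
    rw [map_add, LinearMap.add_apply, LinearMap.flip_apply, hzin.mul_right_comm]
    exact Submodule.add_mem_sup ⟨mul x a, rfl⟩ (hI.mul_mem_right i hi a)

theorem exists_mul_notMem_of_maximal (hzin : IsZinbiel mul) (hB : IsIdeal mul B)
    (hBB : B ≤ Submodule.map₂ mul ⊤ B) (hI : Maximal (fun J => IsIdeal mul J ∧ J < B) I)
    {x : A} (hxB : x ∈ B) (hxI : x ∉ I) : ∃ a, mul a x ∉ I := by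
  by_contra! hx
  have hlt : B ⊓ leftColon mul I < B := inf_le_left.lt_of_not_ge fun hle =>
    hI.prop.2.not_ge (hBB.trans (Submodule.map₂_le.mpr fun a _ b hb =>
      mem_leftColon.mp (hle hb).2 a))
  have hle := hI.le_of_ge ⟨hB.inf (hzin.isIdeal_leftColon hI.prop.1), hlt⟩
    (le_inf hI.prop.2.le hI.prop.1.le_leftColon)
  exact hxI (hle ⟨hxB, mem_leftColon.mpr hx⟩)

end Identities

section Nilpotency

variable {K A : Type*} [Field K] [AddCommGroup A] [Module K A] [FiniteDimensional K A]
  {mul : A →ₗ[K] A →ₗ[K] A} {B I : Submodule K A}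

theorem exists_mem_notMem_forall_mul_add_mul_mem (hzin : IsZinbiel mul)
    {U : Submodule K A} (hU : ∀ a, ∀ u ∈ U, mul a u + mul u a ∈ U) (hUI : ¬ U ≤ I) :
    ∃ s ∈ U, s ∉ I ∧ ∀ a, mul a s + mul s a ∈ I := by
  let := hzin.nonUnitalCommRing
  have : IsScalarTower K A A := ⟨fun r x y =>
    show mul (r • x) y + mul y (r • x) = r • (mul x y + mul y x) by simp⟩
  have : SMulCommClass K A A := ⟨fun r x y =>
    show r • (mul x y + mul y x) = mul x (r • y) + mul (r • y) x by simp⟩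
  exact exists_mem_notMem_forall_mul_mem
    (fun e he => hzin.eq_zero_of_mul_self_add_mul_self_eq he) hU hUI

theorem eq_top_of_map₂_top_top_sup_eq_top (hzin : IsZinbiel mul) {N : Submodule K A}
    (hN : ∀ x ∈ N, ∀ a, mul x a ∈ N) (htop : Submodule.map₂ mul ⊤ ⊤ ⊔ N = ⊤) : N = ⊤ := by
  suffices leftColon mul N = ⊤ by
    refine htop ▸ (sup_eq_right.mpr (Submodule.map₂_le.mpr fun a _ b _ => ?_)).symm
    exact mem_leftColon.mp (this ▸ Submodule.mem_top) a
  by_contra hne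
  obtain ⟨s, -, hs, hsymm⟩ := hzin.exists_mem_notMem_forall_mul_add_mul_mem (I := leftColon mul N)
    (U := ⊤) (fun _ _ _ => Submodule.mem_top) (by rwa [top_le_iff])
  have hsq : Submodule.map₂ mul ⊤ ⊤ ≤ N.comap (mul.flip s) :=
    Submodule.map₂_le.mpr fun a _ b _ => by
      rw [Submodule.mem_comap, LinearMap.flip_apply, hzin, ← map_add]
      exact mem_leftColon.mp (hsymm b) a
  have htop_le : ⊤ ≤ N.comap (mul.flip s) := htop ▸ sup_le hsq fun x hx => hN x hx s
  exact hs (mem_leftColon.mpr fun a => htop_le (Submodule.mem_top (x := a)))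

theorem exists_notMem_forall_mul_mem_of_maximal (hzin : IsZinbiel mul) (hB : IsIdeal mul B)
    (hBB : B ≤ Submodule.map₂ mul ⊤ B) (hI : Maximal (fun J => IsIdeal mul J ∧ J < B) I) :
    ∃ d ∈ B, d ∉ I ∧ ∀ x, mul d x ∈ I := by
  obtain ⟨s, hsB, hsI, hs⟩ := hzin.exists_mem_notMem_forall_mul_add_mul_mem
    (fun a u hu => B.add_mem (hB.mul_mem_left a u hu) (hB.mul_mem_right u hu a)) hI.prop.2.not_ge
  obtain ⟨a, ha⟩ := hzin.exists_mul_notMem_of_maximal hB hBB hI hsB hsI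
  refine ⟨mul a s, hB.mul_mem_left a s hsB, ha, fun x => ?_⟩
  rw [hzin, ← map_add, add_comm]
  exact hI.prop.1.mul_mem_left a _ (hs x)

theorem not_maximal_of_le_map₂_top (hzin : IsZinbiel mul) (hB : IsIdeal mul B)
    (hBB : B ≤ Submodule.map₂ mul ⊤ B) : ¬ Maximal (fun J => IsIdeal mul J ∧ J < B) I := by
  intro hI
  obtain ⟨d, hdB, hdI, hd⟩ := hzin.exists_notMem_forall_mul_mem_of_maximal hB hBB hI
  obtain ⟨a, ha⟩ := hzin.exists_mul_notMem_of_maximal hB hBB hI hdB hdI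
  obtain ⟨⟨hIideal, hIB⟩, -⟩ := id hI
  have hrange : (mul.flip d).range ≤ B := by
    rintro _ ⟨x, rfl⟩
    exact hB.mul_mem_left x d hdB
  have hBle : B ≤ (mul.flip d).range ⊔ I := by
    by_contra hnot
    have hlt := (sup_le hrange hIB.le).lt_of_not_ge hnot
    exact ha (hI.le_of_ge ⟨hzin.isIdeal_range_flip_sup hIideal hd, hlt⟩ le_sup_right
      (Submodule.mem_sup_left ⟨a, rfl⟩))
  have hgen : Submodule.map₂ mul ⊤ ⊤ ⊔ I.comap (mul.flip d) = ⊤ := by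
    refine eq_top_iff.mpr fun x _ => ?_
    obtain ⟨_, ⟨y, hy, rfl⟩, i, hi, hsum⟩ := Submodule.mem_sup.mp
      (hzin.map₂_top_range_flip_sup_le hIideal hd
        (Submodule.map₂_le_map₂_right hBle (hBB (hrange ⟨x, rfl⟩))))
    refine Submodule.mem_sup.mpr ⟨y, hy, x - y, ?_, add_sub_cancel y x⟩
    rwa [Submodule.mem_comap, map_sub, ← hsum, add_sub_cancel_left]
  have hker : I.comap (mul.flip d) = ⊤ := hzin.eq_top_of_map₂_top_top_sup_eq_top (fun x hx y => by
    rw [Submodule.mem_comap, LinearMap.flip_apply, hzin.mul_right_comm]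
    exact hIideal.mul_mem_right _ hx y) hgen
  exact ha (Submodule.eq_top_iff'.mp hker a)

theorem eq_bot_of_le_map₂_top (hzin : IsZinbiel mul) (hB : IsIdeal mul B)
    (hBB : B ≤ Submodule.map₂ mul ⊤ B) : B = ⊥ := by
  by_contra hne
  obtain ⟨I, -, hI⟩ := exists_maximal_ge_of_wellFoundedGT (fun J => IsIdeal mul J ∧ J < B) ⊥
    ⟨isIdeal_bot mul, bot_lt_iff_ne_bot.mpr hne⟩
  exact hzin.not_maximal_of_le_map₂_top hB hBB hI

end Nilpotency

end IsZinbiel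

section DescendingSeries

variable {K A : Type*} [CommRing K] [AddCommGroup A] [Module K A] {mul : A →ₗ[K] A →ₗ[K] A}

theorem zpow_add_two_eq_map₂ (mul : A →ₗ[K] A →ₗ[K] A) (k : ℕ) :
    zpow mul (k + 2) = Submodule.map₂ mul ⊤ (zpow mul (k + 1)) := by
  rw [zpow, Submodule.map₂_eq_span_image2]
  congr 1
  ext z
  simp [Set.mem_image2, eq_comm]

theorem zpow_add_two_le (mul : A →ₗ[K] A →ₗ[K] A) (k : ℕ) :
    zpow mul (k + 2) ≤ zpow mul (k + 1) := by
  induction k with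
  | zero => exact le_top
  | succ k ih =>
    calc zpow mul (k + 3) = Submodule.map₂ mul ⊤ (zpow mul (k + 2)) :=
          zpow_add_two_eq_map₂ mul (k + 1)
      _ ≤ Submodule.map₂ mul ⊤ (zpow mul (k + 1)) := Submodule.map₂_le_map₂_right ih
      _ = zpow mul (k + 2) := (zpow_add_two_eq_map₂ mul k).symm

namespace IsZinbiel

theorem map₂_map₂_le (hzin : IsZinbiel mul) (U V W : Submodule K A) :
    Submodule.map₂ mul (Submodule.map₂ mul U V) W ≤
      Submodule.map₂ mul U (Submodule.map₂ mul V W ⊔ Submodule.map₂ mul W V) := by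
  refine Submodule.map₂_le.mpr fun x hx w hw => ?_
  suffices Submodule.map₂ mul U V ≤ (Submodule.map₂ mul U
      (Submodule.map₂ mul V W ⊔ Submodule.map₂ mul W V)).comap (mul.flip w) from this hx
  refine Submodule.map₂_le.mpr fun u hu v hv => ?_
  rw [Submodule.mem_comap, LinearMap.flip_apply, hzin, ← map_add]
  exact Submodule.apply_mem_map₂ mul hu (Submodule.add_mem_sup
    (Submodule.apply_mem_map₂ mul hv hw) (Submodule.apply_mem_map₂ mul hw hv))

theorem map₂_zpow_top_le (hzin : IsZinbiel mul) (k : ℕ) :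
    Submodule.map₂ mul (zpow mul (k + 1)) ⊤ ≤ zpow mul (k + 2) := by
  induction k with
  | zero => exact (zpow_add_two_eq_map₂ mul 0).ge
  | succ k ih =>
    rw [zpow_add_two_eq_map₂ mul k, zpow_add_two_eq_map₂ mul (k + 1)]
    exact (hzin.map₂_map₂_le _ _ _).trans
      (Submodule.map₂_le_map₂_right (sup_le ih (zpow_add_two_eq_map₂ mul k).ge))

theorem map₂_zpow_two_le (hzin : IsZinbiel mul) (k : ℕ) :
    Submodule.map₂ mul (zpow mul 2) (zpow mul (k + 1)) ≤ zpow mul (k + 3) := by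
  rw [zpow_add_two_eq_map₂ mul 0, zpow_add_two_eq_map₂ mul (k + 1)]
  exact (hzin.map₂_map₂_le _ _ _).trans (Submodule.map₂_le_map₂_right
    (sup_le (zpow_add_two_eq_map₂ mul k).ge (hzin.map₂_zpow_top_le k)))

theorem isIdeal_zpow (hzin : IsZinbiel mul) (k : ℕ) : IsIdeal mul (zpow mul (k + 1)) where
  mul_mem_left _ _ hb := zpow_add_two_le mul k
    ((zpow_add_two_eq_map₂ mul k).ge (Submodule.apply_mem_map₂ mul Submodule.mem_top hb))
  mul_mem_right _ hb _ := zpow_add_two_le mul k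
    (hzin.map₂_zpow_top_le k (Submodule.apply_mem_map₂ mul hb Submodule.mem_top))

theorem exists_zpow_le_span_singleton_sup (hzin : IsZinbiel mul) {x : A}
    (hx : Submodule.span K {x} ⊔ zpow mul 2 = ⊤) (k : ℕ) :
    ∃ y, zpow mul (k + 1) ≤ Submodule.span K {y} ⊔ zpow mul (k + 2) := by
  induction k with
  | zero => exact ⟨x, hx.ge⟩
  | succ k ih =>
    obtain ⟨y, hy⟩ := ih
    refine ⟨mul x y, ?_⟩
    have hspan : Submodule.map₂ mul (Submodule.span K {x}) (zpow mul (k + 1)) ≤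
        Submodule.span K {mul x y} ⊔ zpow mul (k + 3) := by
      refine (Submodule.map₂_le_map₂_right hy).trans ?_
      rw [Submodule.map₂_sup_right, Submodule.map₂_span_span, Set.image2_singleton,
        zpow_add_two_eq_map₂ mul (k + 1)]
      exact sup_le_sup_left (Submodule.map₂_le_map₂_left le_top) _
    rw [zpow_add_two_eq_map₂ mul k, ← hx, Submodule.map₂_sup_left]
    exact sup_le hspan ((hzin.map₂_zpow_two_le k).trans le_sup_right)

end IsZinbiel

end DescendingSeries

section Dimensions

variable {K A : Type*} [Field K] [AddCommGroup A] [Module K A] {mul : A →ₗ[K] A →ₗ[K] A}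

theorem exists_span_singleton_sup_eq_top [FiniteDimensional K A] {W : Submodule K A}
    (hW : Module.finrank K A ≤ Module.finrank K W + 1) :
    ∃ x, Submodule.span K {x} ⊔ W = ⊤ := by
  have hquot : Module.finrank K (A ⧸ W) ≤ 1 := by
    have := W.finrank_quotient_add_finrank
    omega
  obtain ⟨v, hv⟩ := finrank_le_one_iff.mp hquot
  obtain ⟨x, rfl⟩ := W.mkQ_surjective v
  refine ⟨x, eq_top_iff.mpr fun z _ => ?_⟩
  obtain ⟨c, hc⟩ := hv (W.mkQ z)
  rw [← map_smul, eq_comm, ← sub_eq_zero, ← map_sub, ← LinearMap.mem_ker, W.ker_mkQ] at hc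
  exact Submodule.mem_sup.mpr ⟨c • x, Submodule.smul_mem _ c (Submodule.mem_span_singleton_self x),
    z - c • x, hc, add_sub_cancel _ z⟩

namespace IsZinbiel

-- Truncated subtraction: if `A^{k+1} = 0`, this says that `A^{k+2} = 0` too.
theorem finrank_zpow_add_two_le_sub_one [FiniteDimensional K A] (hzin : IsZinbiel mul) (k : ℕ) :
    Module.finrank K (zpow mul (k + 2)) ≤ Module.finrank K (zpow mul (k + 1)) - 1 := by
  rcases (zpow_add_two_le mul k).lt_or_eq with hlt | heq
  · exact Nat.le_sub_one_of_lt (Submodule.finrank_lt_finrank_of_lt hlt)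
  · have hbot : zpow mul (k + 1) = ⊥ := hzin.eq_bot_of_le_map₂_top (hzin.isIdeal_zpow k)
      (heq.ge.trans (zpow_add_two_eq_map₂ mul k).le)
    rw [heq, hbot, finrank_bot]

theorem finrank_zpow_add_one_le [FiniteDimensional K A] (hzin : IsZinbiel mul)
    (hA : Module.finrank K A ≤ Module.finrank K (zpow mul 2) + 1) (k : ℕ) :
    Module.finrank K (zpow mul (k + 1)) ≤ Module.finrank K (zpow mul (k + 2)) + 1 := by
  obtain ⟨x, hx⟩ := exists_span_singleton_sup_eq_top hA
  obtain ⟨y, hy⟩ := hzin.exists_zpow_le_span_singleton_sup hx k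
  have hspan : Module.finrank K (Submodule.span K {y}) ≤ 1 := by
    simpa using finrank_span_le_card (R := K) ({y} : Set A)
  calc Module.finrank K (zpow mul (k + 1))
      ≤ Module.finrank K ↥(Submodule.span K {y} ⊔ zpow mul (k + 2)) := Submodule.finrank_mono hy
    _ ≤ Module.finrank K (Submodule.span K {y}) + Module.finrank K (zpow mul (k + 2)) :=
        Submodule.finrank_add_le_finrank_add_finrank _ _
    _ ≤ Module.finrank K (zpow mul (k + 2)) + 1 := by omega

end IsZinbiel

theorem dim4_possible_dims_general (hzin : IsZinbiel mul) (hdim : Module.finrank K A = 4) :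
    (Module.finrank K (zpow mul 2), Module.finrank K (zpow mul 3),
        Module.finrank K (zpow mul 4)) ∈
      ({(3, 2, 1), (2, 1, 0), (2, 0, 0), (1, 0, 0), (0, 0, 0)} : Set (ℕ × ℕ × ℕ)) := by
  have : FiniteDimensional K A := Module.finite_of_finrank_pos (by omega)
  have hdim₁ : Module.finrank K (zpow mul 1) = 4 := by rw [zpow, finrank_top, hdim]
  have hdrop₁ : Module.finrank K (zpow mul 2) ≤ Module.finrank K (zpow mul 1) - 1 :=
    hzin.finrank_zpow_add_two_le_sub_one 0
  have hdrop₂ : Module.finrank K (zpow mul 3) ≤ Module.finrank K (zpow mul 2) - 1 :=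
    hzin.finrank_zpow_add_two_le_sub_one 1
  have hdrop₃ : Module.finrank K (zpow mul 4) ≤ Module.finrank K (zpow mul 3) - 1 :=
    hzin.finrank_zpow_add_two_le_sub_one 2
  simp only [Set.mem_insert_iff, Set.mem_singleton_iff, Prod.mk.injEq]
  by_cases hgen : Module.finrank K A ≤ Module.finrank K (zpow mul 2) + 1
  · have hquot₂ : Module.finrank K (zpow mul 2) ≤ Module.finrank K (zpow mul 3) + 1 :=
      hzin.finrank_zpow_add_one_le hgen 1
    have hquot₃ : Module.finrank K (zpow mul 3) ≤ Module.finrank K (zpow mul 4) + 1 :=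
      hzin.finrank_zpow_add_one_le hgen 2
    omega
  · omega

end Dimensions

/-- For a 4-dimensional complex Zinbiel algebra the triple
`(dim A², dim A³, dim A⁴)` is one of `(3,2,1), (2,1,0), (2,0,0), (1,0,0), (0,0,0)`. -/
theorem dim4_possible_dims (A : Type*) [AddCommGroup A] [Module ℂ A]
    [FiniteDimensional ℂ A]
    (mul : A →ₗ[ℂ] A →ₗ[ℂ] A) (hzin : IsZinbiel mul)
    (hdim : Module.finrank ℂ A = 4) :
    (Module.finrank ℂ (zpow mul 2), Module.finrank ℂ (zpow mul 3),
        Module.finrank ℂ (zpow mul 4)) = (3, 2, 1) ∨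
    (Module.finrank ℂ (zpow mul 2), Module.finrank ℂ (zpow mul 3),
        Module.finrank ℂ (zpow mul 4)) = (2, 1, 0) ∨
    (Module.finrank ℂ (zpow mul 2), Module.finrank ℂ (zpow mul 3),
        Module.finrank ℂ (zpow mul 4)) = (2, 0, 0) ∨
    (Module.finrank ℂ (zpow mul 2), Module.finrank ℂ (zpow mul 3),
        Module.finrank ℂ (zpow mul 4)) = (1, 0, 0) ∨
    (Module.finrank ℂ (zpow mul 2), Module.finrank ℂ (zpow mul 3),
        Module.finrank ℂ (zpow mul 4)) = (0, 0, 0) :=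
  dim4_possible_dims_general hzin hdim
end
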